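/- arXiv:2106.15773 — 4 statements merged into one kernel-verified Lean document; each statement's English description precedes it below -/
import Mathlib

section
/- Let p_ave > 0 and let p_tot : ℕ → Ω → ℝ be a sequence of nonnegative integrable random variables on a probability space Ω. Define the virtual power queue Q : ℕ → Ω → ℝ by Q(0) = 0 and Q(t+1) = max(Q(t) − p_ave, 0) + p_tot(t) pointwise. If Q is mean rate stable, i.e., lim_{t→∞} (1/t)·E[|Q(t)|] = 0, then limsup_{T→∞} (1/T)·∑_{t=0}^{T−1} E[p_tot(t)] ≤ p_ave. -/
open MeasureTheory Filter

/-- Lemma 1: if the virtual power queue `Q` (driven by total power `p_tot`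
and budget `p_ave`) is mean rate stable, then the time-average expected
total power consumption is at most `p_ave`. -/
theorem mean_rate_stable_implies_avg_power_constraint
    {Ω : Type*} [MeasurableSpace Ω] (μ : Measure Ω) [IsProbabilityMeasure μ]
    (p_ave : ℝ) (hp_ave : 0 < p_ave)
    (p_tot : ℕ → Ω → ℝ)
    (hp_nonneg : ∀ t ω, 0 ≤ p_tot t ω)
    (hp_int : ∀ t, Integrable (p_tot t) μ)
    (Q : ℕ → Ω → ℝ)
    (hQ0 : ∀ ω, Q 0 ω = 0)
    (hQrec : ∀ t ω, Q (t + 1) ω = max (Q t ω - p_ave) 0 + p_tot t ω)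
    (hmrs : Tendsto (fun t : ℕ => (1 / (t : ℝ)) * ∫ ω, |Q t ω| ∂μ) atTop (nhds 0)) :
    limsup (fun T : ℕ =>
      (1 / (T : ℝ)) * ∑ t ∈ Finset.range T, ∫ ω, p_tot t ω ∂μ) atTop ≤ p_ave := by
  have hQi : ∀ t, Integrable (Q t) μ := by
    intro t
    induction t with
    | zero =>
      have h : Q 0 = fun _ => 0 := funext hQ0
      rw [h]; exact integrable_const 0
    | succ t ih =>
      have h : Q (t + 1) = fun ω => max (Q t ω - p_ave) 0 + p_tot t ω := funext (hQrec t)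
      rw [h]
      exact ((ih.sub (integrable_const p_ave)).pos_part).add (hp_int t)
  have hsum : ∀ T : ℕ, ∑ t ∈ Finset.range T, ∫ ω, p_tot t ω ∂μ
      ≤ (∫ ω, Q T ω ∂μ) + T * p_ave := by
    intro T
    induction T with
    | zero => simp [hQ0]
    | succ T ih =>
      rw [Finset.sum_range_succ]
      have h : (∫ ω, (Q T ω - p_ave + p_tot T ω) ∂μ) ≤ ∫ ω, Q (T + 1) ω ∂μ := by
        refine integral_mono (((hQi T).sub (integrable_const p_ave)).add (hp_int T))
          (hQi (T + 1)) ?_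
        intro ω
        have := le_max_left (Q T ω - p_ave) 0
        simp only [hQrec]
        linarith
      rw [integral_add (f := fun ω => Q T ω - p_ave) ((hQi T).sub (integrable_const p_ave))
        (hp_int T), integral_sub (hQi T) (integrable_const p_ave)] at h
      simp at h
      push_cast
      linarith
  have hg : Tendsto (fun t : ℕ => (1 / (t : ℝ)) * (∫ ω, |Q t ω| ∂μ) + p_ave) atTop
      (nhds p_ave) := by
    simpa using hmrs.add_const p_ave
  rw [← hg.limsup_eq]
  refine limsup_le_limsup ?_ ?_ hg.isBoundedUnder_le
  · filter_upwards [eventually_gt_atTop 0] with T hT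
    have hT' : (0 : ℝ) < T := by exact_mod_cast hT
    have h1 : (∫ ω, Q T ω ∂μ) ≤ ∫ ω, |Q T ω| ∂μ :=
      integral_mono (hQi T) (hQi T).abs (fun ω => le_abs_self _)
    have h2 := (hsum T).trans (add_le_add_left h1 _)
    calc _ ≤ (1 / (T : ℝ)) * ((∫ ω, |Q T ω| ∂μ) + T * p_ave) :=
          mul_le_mul_of_nonneg_left h2 (by positivity)
      _ = _ := by field_simp
  · refine IsBoundedUnder.isCoboundedUnder_le (isBoundedUnder_of ⟨0, fun T => ?_⟩)
    exact mul_nonneg (by positivity)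
      (Finset.sum_nonneg fun t _ => integral_nonneg (hp_nonneg t))
end

section
/- Let M ≥ 1, let g_1, …, g_M > 0 be reals, and let R_1, …, R_M ≥ 0 be reals. Define powers p_1, …, p_M by the backward SIC recursion p_m = (2^{R_m} − 1)·(∑_{i=m+1}^M p_i + 1/g_m) for m = M, M−1, …, 1 (the empty sum being 0). Then, setting ν_m = ∑_{i=1}^m R_i and with the convention 1/g_{M+1} := 0, the total power satisfies ∑_{m=1}^M p_m = ∑_{m=1}^M (1/g_m − 1/g_{m+1})·2^{ν_m} − 1/g_1. -/
open Finset

/-- Equation (62), Appendix C: telescoping identity for the total uplink NOMA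
transmit power under the backward SIC power recursion, in the cumulative-rate
variables `ν_m = ∑_{i=1}^m R_i` (with the convention `1/g_{M+1} := 0`). -/
theorem noma_total_power_telescoping
    (M : ℕ) (hM : 1 ≤ M) (g R p : ℕ → ℝ)
    (hg : ∀ m ∈ Icc 1 M, 0 < g m)
    (hR : ∀ m ∈ Icc 1 M, 0 ≤ R m)
    (hp : ∀ m ∈ Icc 1 M,
      p m = ((2 : ℝ) ^ (R m) - 1) * ((∑ i ∈ Icc (m + 1) M, p i) + 1 / g m))
    (ν : ℕ → ℝ) (hν : ∀ m, ν m = ∑ i ∈ Icc 1 m, R i) :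
    ∑ m ∈ Icc 1 M, p m
      = (∑ m ∈ Icc 1 M,
          (1 / g m - if m = M then 0 else 1 / g (m + 1)) * (2 : ℝ) ^ (ν m))
        - 1 / g 1 := by
  have hS : ∀ m ∈ Icc 1 M, (∑ i ∈ Icc m M, p i) + 1 / g m
      = (2 : ℝ) ^ (R m) * ((∑ i ∈ Icc (m + 1) M, p i) + 1 / g m) := by
    intro m hm
    have h1 : ∑ i ∈ Icc m M, p i = p m + ∑ i ∈ Icc (m + 1) M, p i := by
      rw [← Finset.insert_Icc_add_one_left_eq_Icc (mem_Icc.mp hm).2, Finset.sum_insert (by simp)]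
    rw [h1, hp m hm]
    ring
  have hν1 : ∀ k, (2 : ℝ) ^ (ν (k + 1)) = (2 : ℝ) ^ (ν k) * (2 : ℝ) ^ (R (k + 1)) := by
    intro k
    rw [← Real.rpow_add (by norm_num), hν (k + 1), hν k,
      Finset.sum_Icc_succ_top (by omega)]
  have key : ∀ k, k + 1 ≤ M → (∑ i ∈ Icc 1 M, p i) + 1 / g 1
      = (∑ m ∈ Icc 1 k, (1 / g m - 1 / g (m + 1)) * (2 : ℝ) ^ (ν m))
        + (2 : ℝ) ^ (ν k) * ((∑ i ∈ Icc (k + 1) M, p i) + 1 / g (k + 1)) := by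
    intro k
    induction k with
    | zero => intro _; simp [hν 0]
    | succ k ih =>
      intro hk
      rw [ih (by omega), hS (k + 1) (mem_Icc.mpr ⟨by omega, by omega⟩),
        Finset.sum_Icc_succ_top (by omega), hν1 k]
      ring
  obtain ⟨n, rfl⟩ : ∃ n, M = n + 1 := ⟨M - 1, by omega⟩
  have h := key n le_rfl
  rw [hS (n + 1) (mem_Icc.mpr ⟨by omega, le_rfl⟩)] at h
  have he : ∑ i ∈ Icc (n + 1 + 1) (n + 1), p i = 0 := by simp
  rw [he] at h
  have h2 : ∑ m ∈ Icc 1 n, (1 / g m - if m = n + 1 then 0 else 1 / g (m + 1)) * (2 : ℝ) ^ (ν m)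
      = ∑ m ∈ Icc 1 n, (1 / g m - 1 / g (m + 1)) * (2 : ℝ) ^ (ν m) := by
    apply Finset.sum_congr rfl
    intro m hm
    have := (mem_Icc.mp hm).2
    rw [if_neg (by omega)]
  rw [Finset.sum_Icc_succ_top (b := n) (f := fun m =>
    (1 / g m - if m = n + 1 then 0 else 1 / g (m + 1)) * (2 : ℝ) ^ (ν m)) (by omega), h2,
    if_pos rfl, hν1 n]
  linarith
end

section
/- Let V > 0, B ≥ 0, ε > 0 and U* ∈ ℝ be reals, let L : ℕ → ℝ satisfy L(t) ≥ 0 for all t, let U : ℕ → ℝ, and let Q : ℕ → ℝ satisfy Q(t) ≥ 0 for all t. Suppose that for every t ∈ ℕ, L(t+1) − L(t) − V·U(t) ≤ B − V·U* − ε·Q(t). Then for every T ≥ 1, (1/T)·∑_{t=0}^{T−1} Q(t) ≤ B/ε − (V/ε)·(U* − (1/T)·∑_{t=0}^{T−1} U(t)) + L(0)/(ε·T). -/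
open Finset

/-- Theorem 2 (queue-length half): if the drift-plus-penalty bound with slack
`ε·Q(t)` holds at every slot, then the time-average total queue backlog is
bounded, exhibiting the `[O(1/V), O(V)]` utility–backlog tradeoff. -/
theorem drift_plus_penalty_queue_bound
    (V B ε Ustar : ℝ) (hV : 0 < V) (hB : 0 ≤ B) (hε : 0 < ε)
    (L : ℕ → ℝ) (hL : ∀ t, 0 ≤ L t) (U : ℕ → ℝ)
    (Q : ℕ → ℝ) (hQ : ∀ t, 0 ≤ Q t)
    (hdrift : ∀ t, L (t + 1) - L t - V * U t ≤ B - V * Ustar - ε * Q t) :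
    ∀ T : ℕ, 1 ≤ T →
      (1 / (T : ℝ)) * ∑ t ∈ range T, Q t
        ≤ B / ε - (V / ε) * (Ustar - (1 / (T : ℝ)) * ∑ t ∈ range T, U t)
          + L 0 / (ε * T) := by
  intro T hT
  have key : ∀ n : ℕ, ε * ∑ t ∈ range n, Q t + L n
      ≤ n * B - n * (V * Ustar) + V * ∑ t ∈ range n, U t + L 0 := by
    intro n
    induction n with
    | zero => simp
    | succ k ih =>
      rw [sum_range_succ, sum_range_succ]
      push_cast
      linarith [hdrift k]
  have hTp : (0 : ℝ) < T := by exact_mod_cast hT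
  have h1 := key T
  have h2 := hL T
  generalize (∑ t ∈ range T, Q t) = q at *
  generalize (∑ t ∈ range T, U t) = u at *
  have e : B / ε - (V / ε) * (Ustar - (1 / (T : ℝ)) * u) + L 0 / (ε * T)
      = (T * B - T * (V * Ustar) + V * u + L 0) / (ε * T) := by
    field_simp
    ring
  have e2 : (1 / (T : ℝ)) * q = (ε * q) / (ε * T) := by
    field_simp
  rw [e, e2]
  apply div_le_div_of_nonneg_right _ (by positivity)
  linarith
end

section
/- Let Q : ℕ → ℝ with Q(0) ≥ 0, and for each t let A(t) and μ(t) be reals with 0 ≤ A(t) ≤ δ_A and 0 ≤ μ(t) ≤ δ_μ, where the queue evolves by Q(t+1) = max(Q(t) − μ(t), 0) + A(t). Then for every t ∈ ℕ and every n ∈ ℕ, |Q(t + n) − Q(t)| ≤ n · max(δ_A, δ_μ). -/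
/-- Lemma 4: under per-slot arrival bound `δ_A` and service bound `δ_μ`, the
queue backlog drifts by at most `n · max(δ_A, δ_μ)` over `n` slots, bounding
the error of stale queue-state knowledge. -/
theorem stale_queue_state_bound
    (Q A μ : ℕ → ℝ) (δA δμ : ℝ)
    (hQ0 : 0 ≤ Q 0)
    (hA : ∀ t, 0 ≤ A t ∧ A t ≤ δA)
    (hμ : ∀ t, 0 ≤ μ t ∧ μ t ≤ δμ)
    (hQrec : ∀ t, Q (t + 1) = max (Q t - μ t) 0 + A t) :
    ∀ t n : ℕ, |Q (t + n) - Q t| ≤ n * max δA δμ := by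
  have hnn : ∀ t, 0 ≤ Q t := by
    intro t
    cases t with
    | zero => exact hQ0
    | succ k =>
      rw [hQrec k]
      exact add_nonneg (le_max_right _ _) (hA k).1
  have step : ∀ t, |Q (t + 1) - Q t| ≤ max δA δμ := by
    intro t
    have h1 := hA t
    have h2 := hμ t
    have h3 := hnn t
    have h4 := le_max_left δA δμ
    have h5 := le_max_right δA δμ
    have h6 := le_max_left (Q t - μ t) 0
    have h7 : max (Q t - μ t) 0 ≤ Q t := max_le (by linarith) h3
    rw [hQrec t, abs_le]
    constructor <;> linarith
  intro t n
  induction n with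
  | zero => simp
  | succ k ih =>
    have h := step (t + k)
    have h' := abs_sub_le (Q (t + k + 1)) (Q (t + k)) (Q t)
    rw [← add_assoc]
    push_cast
    linarith
end
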